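/- arXiv:2411.12661 — 2 statements merged into one kernel-verified Lean document; each statement's English description precedes it below -/
import Mathlib

section
/- Let p be a prime number and let R be a commutative ring in which the element p is nilpotent. Then the Laurent series (1 + T)^p − 1 is a unit of R((T)). -/
/-!
If a positive integer is nilpotent in `R`, then `R` is an algebra over a finite ring `S = ℤ/c`.
Let `f` be a monic polynomial over `S`. The quotient `S[X] ⧸ (f)` is finite, so two powers of `X`
agree in it, that is, `f` divides `X ^ a * (1 - X ^ b)` for some `a` and some `b > 0`.
Both factors become invertible at `X = T`, and a divisor of a unit is a unit, so `f(T)` is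
invertible in `R((T))`. This applies to `f = (1 + X) ^ n - 1` for every `n > 0`.
-/

section Polynomials

open Polynomial

theorem exists_dvd_X_pow_mul_one_sub_X_pow_of_monic {S : Type*} [CommRing S] [Finite S]
    {f : S[X]} (hf : f.Monic) : ∃ a b : ℕ, b ≠ 0 ∧ f ∣ X ^ a * (1 - X ^ b) := by
  have : Module.Finite S (AdjoinRoot f) := hf.finite_adjoinRoot
  have : Finite (AdjoinRoot f) := Module.finite_of_finite S
  obtain ⟨a, c, hac, hpow⟩ : ∃ a c : ℕ, a < c ∧ AdjoinRoot.root f ^ a = AdjoinRoot.root f ^ c :=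
    Set.finite_univ.exists_lt_map_eq_of_forall_mem fun _ ↦ Set.mem_univ _
  obtain ⟨b, rfl⟩ := Nat.exists_eq_add_of_le hac.le
  refine ⟨a, b, by lia, AdjoinRoot.mk_eq_zero.mp ?_⟩
  rw [mul_sub, mul_one, ← pow_add, map_sub, map_pow, map_pow, AdjoinRoot.mk_X, hpow, sub_self]

theorem monic_one_add_X_pow_sub_one (S : Type*) [Ring S] {n : ℕ} (hn : n ≠ 0) :
    ((1 + X) ^ n - 1 : S[X]).Monic := by
  nontriviality S
  have hmonic : (1 + X : S[X]).Monic := by simpa [add_comm] using monic_X_add_C (1 : S)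
  have hdeg : (1 + X : S[X]).natDegree = 1 := by simpa [add_comm] using natDegree_X_add_C (1 : S)
  refine (hmonic.pow n).sub_of_left ?_
  rw [degree_one, ← natDegree_pos_iff_degree_pos, hmonic.natDegree_pow, hdeg, mul_one]
  exact hn.pos

end Polynomials

theorem ringChar_ne_zero_of_isNilpotent_natCast {R : Type*} [Semiring R] {m : ℕ}
    (hm : m ≠ 0) (h : IsNilpotent (m : R)) : ringChar R ≠ 0 := by
  obtain ⟨k, hk⟩ := h
  exact ne_zero_of_dvd_ne_zero (pow_ne_zero k hm) (ringChar.dvd (by exact_mod_cast hk))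

namespace LaurentSeries

theorem isUnit_single_one_one {R : Type*} [CommSemiring R] :
    IsUnit (HahnSeries.single 1 1 : LaurentSeries R) :=
  .of_mul_eq_one (HahnSeries.single (-1) 1) (by simp [HahnSeries.single_mul_single])

theorem isUnit_one_sub_single_one_one_pow {R : Type*} [Ring R] {n : ℕ} (hn : n ≠ 0) :
    IsUnit (1 - HahnSeries.single 1 1 ^ n : LaurentSeries R) := by
  have hunit : IsUnit (1 - PowerSeries.X ^ n : PowerSeries R) := by
    simp [PowerSeries.isUnit_iff_constantCoeff, hn]
  simpa using hunit.map (HahnSeries.ofPowerSeries ℤ R)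

variable {R : Type*} [CommRing R]

theorem isUnit_aeval_single_one_one_of_monic {S : Type*} [CommRing S] [Finite S] [Algebra S R]
    {f : Polynomial S} (hf : f.Monic) :
    IsUnit (Polynomial.aeval (HahnSeries.single 1 1 : LaurentSeries R) f) := by
  obtain ⟨a, b, hb, hdvd⟩ := exists_dvd_X_pow_mul_one_sub_X_pow_of_monic hf
  refine isUnit_of_dvd_unit (map_dvd (Polynomial.aeval _) hdvd) ?_
  simpa only [map_mul, map_sub, map_pow, map_one, Polynomial.aeval_X] using
    (isUnit_single_one_one.pow a).mul (isUnit_one_sub_single_one_one_pow hb)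

theorem isUnit_one_add_T_pow_p_sub_one_general {m n : ℕ} (hm : m ≠ 0) (h : IsNilpotent (m : R))
    (hn : n ≠ 0) : IsUnit ((1 + HahnSeries.single 1 1) ^ n - 1 : LaurentSeries R) := by
  have : NeZero (ringChar R) := ⟨ringChar_ne_zero_of_isNilpotent_natCast hm h⟩
  let : Algebra (ZMod (ringChar R)) R := ZMod.algebra R (ringChar R)
  simpa using isUnit_aeval_single_one_one_of_monic (R := R)
    (monic_one_add_X_pow_sub_one (ZMod (ringChar R)) hn)

end LaurentSeries

/-- Let `p` be a prime number and `R` a commutative ring in which `p`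
is nilpotent.  Then the Laurent series `(1 + T)^p - 1` is a unit of `R((T))`, where `T`
denotes the Laurent series `single 1 1`. -/
theorem LaurentSeries.isUnit_one_add_T_pow_p_sub_one
    (p : ℕ) (hp : p.Prime) (R : Type*) [CommRing R] (h : IsNilpotent (p : R)) :
    IsUnit ((1 + HahnSeries.single (1 : ℤ) (1 : R)) ^ p - 1 : LaurentSeries R) :=
  LaurentSeries.isUnit_one_add_T_pow_p_sub_one_general hp.ne_zero h hp.ne_zero
end

section
/- Let A be a Noetherian integral domain and let f : M → N be an A-linear map of finitely generated A-modules. Then there exists a nonzero element g ∈ A such that for every field κ equipped with an A-algebra structure in which the image of g is nonzero, the canonical κ-linear map ker(f) ⊗_A κ → M ⊗_A κ induced by the inclusion ker(f) ⊆ M is injective; equivalently, the canonical map ker(f) ⊗_A κ → ker(f ⊗_A κ : M ⊗_A κ → N ⊗_A κ) is injective. -/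
universe u v

/-!
The image of `f` is a finitely generated module over a domain, so some nonzero `g` multiplies it
into a free submodule. Since maps out of a free module lift along surjections, `f : M → range f`
has a section `σ` up to the factor `g`, and then `g - σ ∘ f` retracts `M` onto `ker f`, again up to
`g`. This identity survives any base change, and says that the base change of `ker f ⊆ M` is
injective as soon as `g` becomes invertible.
-/

open Function

section CommSemiring

variable {A P M : Type*} [CommSemiring A] [AddCommMonoid P] [Module A P]
  [AddCommMonoid M] [Module A M]

theorem baseChange_injective_of_comp_eq_smul_id {i : P →ₗ[A] M} {s : M →ₗ[A] P} {g : A}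
    (hs : s ∘ₗ i = g • LinearMap.id) (B : Type*) [Semiring B] [Algebra A B]
    (hg : IsUnit (algebraMap A B g)) : Injective (i.baseChange B) := by
  have hcomp : s.baseChange B ∘ₗ i.baseChange B = g • LinearMap.id := by
    rw [← LinearMap.baseChange_comp, hs, LinearMap.baseChange_smul, LinearMap.baseChange_id]
  refine .of_comp (f := s.baseChange B) fun x y hxy ↦ hg.smul_left_cancel.mp ?_
  rw [← LinearMap.coe_comp, hcomp] at hxy
  simpa only [algebraMap_smul, LinearMap.smul_apply, LinearMap.id_apply] using hxy

end CommSemiring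

section CommRing

variable {A M N : Type*} [CommRing A] [AddCommGroup M] [Module A M] [AddCommGroup N] [Module A N]

theorem exists_comp_ker_subtype_eq_smul_id_of_comp_eq_smul_id {f : M →ₗ[A] N} {σ : N →ₗ[A] M}
    {g : A} (hσ : f ∘ₗ σ = g • LinearMap.id) :
    ∃ s : M →ₗ[A] LinearMap.ker f, s ∘ₗ (LinearMap.ker f).subtype = g • LinearMap.id := by
  have hmem (x : M) : (g • LinearMap.id - σ ∘ₗ f : M →ₗ[A] M) x ∈ LinearMap.ker f := by
    have hx : f (σ (f x)) = g • f x := LinearMap.congr_fun hσ (f x)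
    simp [hx]
  refine ⟨(g • LinearMap.id - σ ∘ₗ f).codRestrict _ hmem, ?_⟩
  ext x
  simp

theorem exists_mem_nonZeroDivisors_forall_smul_mem_of_isTorsion_quotient {L : Submodule A M}
    [Module.Finite A (M ⧸ L)] (hL : Module.IsTorsion A (M ⧸ L)) :
    ∃ g ∈ nonZeroDivisors A, ∀ x : M, g • x ∈ L := by
  obtain ⟨g, hann, hg⟩ := Submodule.annihilator_top_inter_nonZeroDivisors hL
  refine ⟨g, hg, fun x ↦ ?_⟩
  rw [← Submodule.Quotient.mk_eq_zero, Submodule.Quotient.mk_smul]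
  exact Submodule.mem_annihilator.mp hann _ Submodule.mem_top

variable [IsDomain A]

variable (A M) in
theorem exists_free_submodule_isTorsion_quotient :
    ∃ L : Submodule A M, Module.Free A L ∧ Module.IsTorsion A (M ⧸ L) := by
  obtain ⟨t, ht, hmax⟩ := exists_maximal_linearIndepOn A (id : M → M)
  rw [Set.image_id] at hmax
  have htorsion (x : M) : ∃ a : A, a ≠ 0 ∧ a • x ∈ Submodule.span A t := by
    by_cases hx : x ∈ t
    · exact ⟨1, one_ne_zero, (one_smul A x).symm ▸ Submodule.subset_span hx⟩
    · exact hmax x hx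
  have hfree : Module.Free A (Submodule.span A t) := by
    rw [← Subtype.range_coe (s := t)]
    exact .of_basis (.span ht)
  refine ⟨Submodule.span A t, hfree, fun y ↦ ?_⟩
  obtain ⟨x, rfl⟩ := Submodule.Quotient.mk_surjective _ y
  obtain ⟨a, ha, hax⟩ := htorsion x
  exact ⟨⟨a, mem_nonZeroDivisors_of_ne_zero ha⟩, (Submodule.Quotient.mk_eq_zero _).mpr hax⟩

theorem exists_comp_eq_smul_id_of_surjective [Module.Finite A N] {f : M →ₗ[A] N}
    (hf : Surjective f) :
    ∃ g : A, g ≠ 0 ∧ ∃ σ : N →ₗ[A] M, f ∘ₗ σ = g • LinearMap.id := by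
  obtain ⟨L, _, hL⟩ := exists_free_submodule_isTorsion_quotient A N
  obtain ⟨g, hg, hmem⟩ := exists_mem_nonZeroDivisors_forall_smul_mem_of_isTorsion_quotient hL
  obtain ⟨τ, hτ⟩ := Module.projective_lifting_property f L.subtype hf
  refine ⟨g, nonZeroDivisors.ne_zero hg, τ ∘ₗ (g • LinearMap.id).codRestrict L hmem, ?_⟩
  rw [← LinearMap.comp_assoc, hτ, LinearMap.subtype_comp_codRestrict]

theorem generic_baseChange_ker_injective_general (f : M →ₗ[A] N)
    [Module.Finite A (LinearMap.range f)] :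
    ∃ g : A, g ≠ 0 ∧ ∀ (B : Type v) [Semiring B] [Algebra A B],
      IsUnit (algebraMap A B g) →
        Injective (LinearMap.baseChange B (LinearMap.ker f).subtype) := by
  obtain ⟨g, hg, σ, hσ⟩ := exists_comp_eq_smul_id_of_surjective f.surjective_rangeRestrict
  obtain ⟨s, hs⟩ := exists_comp_ker_subtype_eq_smul_id_of_comp_eq_smul_id hσ
  rw [← f.ker_rangeRestrict]
  exact ⟨g, hg, fun B _ _ hB ↦ baseChange_injective_of_comp_eq_smul_id hs B hB⟩

end CommRing

/-- Let `A` be a Noetherian integral domain and `f : M → N` an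
`A`-linear map of finitely generated `A`-modules.  Then there is a nonzero `g ∈ A` such
that for every field `κ` with an `A`-algebra structure in which the image of `g` is
nonzero, the canonical `κ`-linear map `ker f ⊗_A κ → M ⊗_A κ` induced by the inclusion
`ker f ⊆ M` (equivalently, the map `ker f ⊗_A κ → ker (f ⊗_A κ)`) is injective. -/
theorem generic_baseChange_ker_injective
    {A : Type u} [CommRing A] [IsDomain A] [IsNoetherianRing A]
    {M N : Type u} [AddCommGroup M] [Module A M] [AddCommGroup N] [Module A N]
    [Module.Finite A M] [Module.Finite A N] (f : M →ₗ[A] N) :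
    ∃ g : A, g ≠ 0 ∧ ∀ (κ : Type v) [Field κ] [Algebra A κ],
      algebraMap A κ g ≠ 0 →
        Function.Injective (LinearMap.baseChange κ (LinearMap.ker f).subtype) := by
  obtain ⟨g, hg, hinj⟩ := generic_baseChange_ker_injective_general f
  exact ⟨g, hg, fun κ _ _ hκ ↦ hinj κ hκ.isUnit⟩
end
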